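/- arXiv:1502.03085 — 3 statements merged into one kernel-verified Lean document; each statement's English description precedes it below -/
import Mathlib

section
/- Let m be a positive integer and n = 2m+1. For every integer r and every j with 1 ≤ j ≤ m: 𝓕_r^{(m,j)} = (−1)^{r−1} · Σ_{t=1}^{m} (2·sin((2j−1)πt/n)) / (2·sin(πt/n))^{2r−1} and 𝓖_r^{(m,j)} = (−1)^{r−1} · Σ_{t=1}^{m} (2·cos(2jπt/n)) / (2·sin(πt/n))^{2r−2}. (Geometrically, these express the sequence terms as sums of ratios of powers of the signed diagonals d_{n,k} = 2·sin(πk/n) of the regular n-gon inscribed in the unit circle.) -/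
open Real Finset Filter

/-- `φ_{m,k} = 2·cos(2πk/(2m+1))`. -/
noncomputable def phiF (m : ℕ) (k : ℤ) : ℝ := 2 * Real.cos (2 * Real.pi * k / (2 * m + 1))

/-- `μ_{m,k} = φ_{m,k} − 2`. -/
noncomputable def muF (m : ℕ) (k : ℤ) : ℝ := phiF m k - 2

/-- The `m`-dimensional interlacing Fibonacci sequence
`𝓕_r^{(m,j)} = Σ_{t=1}^{m} μ_{m,t}^{−r}·(φ_{m,jt} − φ_{m,(j−1)t})`. -/
noncomputable def Fcal (m : ℕ) (r : ℤ) (j : ℤ) : ℝ :=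
  ∑ t ∈ Finset.Icc 1 m, (muF m t) ^ (-r) * (phiF m (j * t) - phiF m ((j - 1) * t))

/-- The companion sequence
`𝓖_r^{(m,j)} = Σ_{t=1}^{m} μ_{m,t}^{−r}·(φ_{m,(j+1)t} − 2φ_{m,jt} + φ_{m,(j−1)t})`. -/
noncomputable def Gcal (m : ℕ) (r : ℤ) (j : ℤ) : ℝ :=
  ∑ t ∈ Finset.Icc 1 m,
    (muF m t) ^ (-r) * (phiF m ((j + 1) * t) - 2 * phiF m (j * t) + phiF m ((j - 1) * t))

/-!
Write `n = 2m + 1` and `s = 2 sin (πt/n)`. The product formulas for cosines turn the first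
difference `φ_{jt} - φ_{(j-1)t}` into `-s · 2 sin ((2j-1)πt/n)` and the second difference
`φ_{(j+1)t} - 2φ_{jt} + φ_{(j-1)t}` into `μ_t φ_{jt}`, while `μ_t = φ_t - φ_0 = -s²`. The
identities therefore hold term by term.
-/

theorem phiF_sub_phiF (m : ℕ) (a b : ℤ) :
    phiF m a - phiF m b =
      -(2 * sin (π * (a - b) / (2 * m + 1)) * (2 * sin (π * (a + b) / (2 * m + 1)))) := by
  have half_sum : (2 * π * a / (2 * m + 1) + 2 * π * b / (2 * m + 1)) / 2 =
      π * (a + b) / (2 * m + 1) := by ring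
  have half_diff : (2 * π * a / (2 * m + 1) - 2 * π * b / (2 * m + 1)) / 2 =
      π * (a - b) / (2 * m + 1) := by ring
  rw [phiF, phiF, ← mul_sub, cos_sub_cos, half_sum, half_diff]
  ring

theorem phiF_add_add_phiF_sub (m : ℕ) (a b : ℤ) :
    phiF m (a + b) + phiF m (a - b) = phiF m a * phiF m b := by
  simp only [phiF, Int.cast_add, Int.cast_sub, mul_add, mul_sub, add_div, sub_div, cos_add, cos_sub]
  ring

theorem phiF_second_difference (m : ℕ) (a b : ℤ) :
    phiF m (a + b) - 2 * phiF m a + phiF m (a - b) = muF m b * phiF m a := by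
  rw [muF]
  linear_combination phiF_add_add_phiF_sub m a b

theorem muF_eq_neg_sq (m : ℕ) (k : ℤ) :
    muF m k = -(2 * sin (π * k / (2 * m + 1))) ^ 2 := by
  have phiF_zero : phiF m 0 = 2 := by simp [phiF]
  have phiF_sub_phiF_zero := phiF_sub_phiF m k 0
  rwa [phiF_zero, Int.cast_zero, sub_zero, add_zero, ← sq] at phiF_sub_phiF_zero

theorem sin_pi_mul_div_pos {x n : ℝ} (hx : 0 < x) (hxn : x < n) : 0 < sin (π * x / n) := by
  have hn : 0 < n := hx.trans hxn
  refine sin_pos_of_pos_of_lt_pi (by positivity) ?_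
  rw [div_lt_iff₀ hn]
  gcongr

theorem two_mul_sin_pi_mul_div_ne_zero_of_mem_Icc {m t : ℕ} (ht : t ∈ Icc 1 m) :
    2 * sin (π * t / (2 * m + 1)) ≠ 0 := by
  obtain ⟨one_le, le_m⟩ := mem_Icc.mp ht
  have t_pos : (0 : ℝ) < t := by exact_mod_cast one_le
  have t_lt : (t : ℝ) < 2 * m + 1 := by exact_mod_cast (by lia : t < 2 * m + 1)
  exact mul_ne_zero two_ne_zero (sin_pi_mul_div_pos t_pos t_lt).ne'

theorem neg_sq_zpow_neg_mul_neg_pow_mul {K : Type*} [Field K] {s : K} (hs : s ≠ 0) (c : K)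
    (r : ℤ) (k : ℕ) :
    (-s ^ 2) ^ (-r) * -(s ^ k * c) = (-1) ^ (r - 1) * (c / s ^ (2 * r - k)) := by
  have neg_one_zpow_neg : (-1 : K) ^ (-r) = (-1) ^ r := by rw [zpow_neg, ← inv_zpow, inv_neg_one]
  have sq_zpow_neg : (s ^ 2) ^ (-r) = (s ^ (2 * r))⁻¹ := by
    rw [zpow_neg, zpow_mul, zpow_ofNat]
  rw [neg_eq_neg_one_mul (s ^ 2), mul_zpow, neg_one_zpow_neg, sq_zpow_neg, zpow_sub₀ hs,
    zpow_natCast, zpow_sub_one₀ (neg_ne_zero.mpr one_ne_zero), inv_neg_one, div_div_eq_mul_div]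
  ring

theorem stmt_9_general (m : ℕ) (r j : ℤ) :
    Fcal m r j =
      (-1 : ℝ) ^ (r - 1) *
        ∑ t ∈ Icc 1 m,
          (2 * sin ((2 * (j : ℝ) - 1) * π * t / (2 * m + 1))) /
            (2 * sin (π * t / (2 * m + 1))) ^ (2 * r - 1) ∧
    Gcal m r j =
      (-1 : ℝ) ^ (r - 1) *
        ∑ t ∈ Icc 1 m,
          (2 * cos (2 * (j : ℝ) * π * t / (2 * m + 1))) /
            (2 * sin (π * t / (2 * m + 1))) ^ (2 * r - 2) := by
  rw [Fcal, Gcal, mul_sum, mul_sum]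
  refine ⟨sum_congr rfl fun t ht => ?_, sum_congr rfl fun t ht => ?_⟩
  · have first_difference : phiF m (j * t) - phiF m ((j - 1) * t) =
        -((2 * sin (π * t / (2 * m + 1))) ^ 1 *
          (2 * sin ((2 * (j : ℝ) - 1) * π * t / (2 * m + 1)))) := by
      rw [phiF_sub_phiF, pow_one]
      push_cast
      ring_nf
    rw [first_difference, muF_eq_neg_sq, Int.cast_natCast]
    have two_mul_sin_ne_zero := two_mul_sin_pi_mul_div_ne_zero_of_mem_Icc ht
    exact_mod_cast neg_sq_zpow_neg_mul_neg_pow_mul two_mul_sin_ne_zero _ r 1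
  · have second_difference :
        phiF m ((j + 1) * t) - 2 * phiF m (j * t) + phiF m ((j - 1) * t) =
          -((2 * sin (π * t / (2 * m + 1))) ^ 2 *
            (2 * cos (2 * (j : ℝ) * π * t / (2 * m + 1)))) := by
      rw [add_one_mul, sub_one_mul, phiF_second_difference, muF_eq_neg_sq, phiF]
      push_cast
      ring_nf
    rw [second_difference, muF_eq_neg_sq, Int.cast_natCast]
    have two_mul_sin_ne_zero := two_mul_sin_pi_mul_div_ne_zero_of_mem_Icc ht
    exact_mod_cast neg_sq_zpow_neg_mul_neg_pow_mul two_mul_sin_ne_zero _ r 2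

theorem stmt_9 (m : ℕ) (hm : 0 < m) (r : ℤ) (j : ℕ) (hj1 : 1 ≤ j) (hjm : j ≤ m) :
    Fcal m r j =
      (-1 : ℝ) ^ (r - 1) *
        ∑ t ∈ Finset.Icc 1 m,
          (2 * Real.sin ((2 * (j : ℝ) - 1) * Real.pi * t / (2 * m + 1))) /
            (2 * Real.sin (Real.pi * t / (2 * m + 1))) ^ (2 * r - 1) ∧
    Gcal m r j =
      (-1 : ℝ) ^ (r - 1) *
        ∑ t ∈ Finset.Icc 1 m,
          (2 * Real.cos (2 * (j : ℝ) * Real.pi * t / (2 * m + 1))) /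
            (2 * Real.sin (Real.pi * t / (2 * m + 1))) ^ (2 * r - 2) := by
  simpa only [Int.cast_natCast] using stmt_9_general m r j
end

section
/- Let m be a positive integer and n = 2m+1. For every integer r: (i) Σ_{j=1}^{m} ( 𝓕_r^{(m,j)} )² = −n · Σ_{t=1}^{m} μ_{m,t}^{1−2r} = −n·𝓕_{2r}^{(m,1)}; and (ii) 4·( Σ_{t=1}^{m} μ_{m,t}^{1−r} )² + 2·Σ_{j=1}^{m} ( 𝓖_r^{(m,j)} )² = 2n · Σ_{t=1}^{m} μ_{m,t}^{2−2r}. -/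
open Real Finset Filter

/-!
For fixed `m` and weights `a`, put `x j = ∑ t, a t * φ (j * t)`. Since
`φ k * φ l = φ (k + l) + φ (k - l)`, multiplying the weights by `μ` turns `x` into its second
difference, and everything follows from `x` being even and `(2 * m + 1)`-periodic by summation by
parts. First, `μ k * ∑ j, φ (j * k)` telescopes, so `∑ j, φ (j * k) = -1` when `μ k ≠ 0`; this gives
a Parseval identity for `x`, and hence (ii), because `𝓖` is the transform of the weights
`μ ^ (1 - r)`. Second, `𝓕` is the first difference of the transform of `μ ^ (-r)`, and
`∑ j, (x j - x (j - 1)) ^ 2` equals `-∑ j, x j * (x (j + 1) - 2 * x j + x (j - 1))` plus a boundary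
term at `0`. Parseval evaluates the sum, and its rank-one part cancels the boundary term, which
gives (i).
-/

theorem sum_sub_mul_sub_add_sum_mul_secondDiff {R : Type*} [CommRing R] (x y : ℤ → R) (m : ℕ) :
    ∑ j ∈ Icc 1 m, (x j - x (j - 1)) * (y j - y (j - 1))
        + ∑ j ∈ Icc 1 m, x j * (y (j + 1) - 2 * y j + y (j - 1))
      = x m * (y (m + 1) - y m) - x 0 * (y 1 - y 0) := by
  induction m with
  | zero => simp
  | succ m ih =>
    rw [sum_Icc_succ_top (by lia), sum_Icc_succ_top (by lia), add_add_add_comm, ih]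
    push_cast
    rw [add_sub_cancel_right]
    ring

section Phi

variable (m : ℕ)

theorem phiF_zero : phiF m 0 = 2 := by
  simp [phiF]

theorem phiF_neg (k : ℤ) : phiF m (-k) = phiF m k := by
  simp [phiF, neg_div]

theorem phiF_mul_phiF (k l : ℤ) : phiF m k * phiF m l = phiF m (k + l) + phiF m (k - l) := by
  simp only [phiF, Int.cast_add, Int.cast_sub, mul_add, mul_sub, add_div, sub_div, cos_add, cos_sub]
  ring

theorem phiF_add_period_mul (k l : ℤ) : phiF m (k + (2 * m + 1) * l) = phiF m k := by
  have hn : (2 * m + 1 : ℝ) ≠ 0 := by positivity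
  have hangle : 2 * π * (k + (2 * m + 1) * l : ℤ) / (2 * m + 1)
      = 2 * π * k / (2 * m + 1) + l * (2 * π) := by
    push_cast
    field_simp
  rw [phiF, hangle, cos_add_int_mul_two_pi, phiF]

theorem phiF_succ_mul (k : ℤ) : phiF m ((m + 1) * k) = phiF m (m * k) := by
  rw [← phiF_neg m (m * k), ← phiF_add_period_mul m (-(m * k)) k]
  ring_nf

theorem muF_mul_phiF (j k : ℤ) :
    muF m k * phiF m (j * k)
      = phiF m ((j + 1) * k) - 2 * phiF m (j * k) + phiF m ((j - 1) * k) := by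
  rw [muF, sub_mul, mul_comm (phiF m k), phiF_mul_phiF, add_one_mul, sub_one_mul]
  ring

theorem muF_eq_zero_iff (k : ℤ) : muF m k = 0 ↔ (2 * m + 1 : ℤ) ∣ k := by
  have hn : (2 * m + 1 : ℝ) ≠ 0 := by positivity
  have hcos : muF m k = 0 ↔ cos (2 * π * k / (2 * m + 1)) = 1 := by
    rw [muF, phiF]
    constructor <;> intro h <;> linarith
  rw [hcos, cos_eq_one_iff]
  refine exists_congr fun l => ?_
  rw [eq_div_iff hn, ← @Int.cast_inj ℝ]
  push_cast
  constructor <;> intro h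
  · exact mul_left_cancel₀ two_pi_pos.ne' (by linarith)
  · rw [h]
    ring

theorem muF_ne_zero {t : ℕ} (ht : t ∈ Icc 1 m) : muF m t ≠ 0 := by
  rw [mem_Icc] at ht
  rw [Ne, muF_eq_zero_iff]
  exact fun h => absurd (Int.le_of_dvd (by lia) h) (by lia)

theorem sum_phiF_mul_eq_neg_one {k : ℤ} (hk : ¬ (2 * m + 1 : ℤ) ∣ k) :
    ∑ j ∈ Icc 1 m, phiF m (j * k) = -1 := by
  have hμ : muF m k ≠ 0 := (muF_eq_zero_iff m k).not.mpr hk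
  have htelescope : ∑ j ∈ Icc 1 m, muF m k * phiF m (j * k) = -muF m k := by
    simpa [← muF_mul_phiF, phiF_succ_mul, phiF_zero, muF] using
      sum_sub_mul_sub_add_sum_mul_secondDiff 1 (fun j => phiF m (j * k)) m
  apply mul_left_cancel₀ hμ
  rw [mul_sum, htelescope, mul_neg_one]

theorem sum_phiF_mul_mul_phiF_mul {s t : ℕ} (hs : s ∈ Icc 1 m) (ht : t ∈ Icc 1 m) :
    ∑ j ∈ Icc 1 m, phiF m (j * s) * phiF m (j * t)
      = (if s = t then (2 * m + 1 : ℝ) else 0) - 2 := by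
  rw [mem_Icc] at hs ht
  have hadd : ∑ j ∈ Icc 1 m, phiF m (j * (s + t)) = -1 :=
    sum_phiF_mul_eq_neg_one m fun h => absurd (Int.le_of_dvd (by lia) h) (by lia)
  simp only [phiF_mul_phiF, ← mul_add, ← mul_sub, sum_add_distrib, hadd]
  split_ifs with h
  · subst h
    simp only [sub_self, mul_zero, phiF_zero, sum_const, Nat.card_Icc, add_tsub_cancel_right,
      nsmul_eq_mul]
    ring
  · have hsub : ¬ (2 * m + 1 : ℤ) ∣ s - t := by
      intro hdvd
      have := Int.eq_zero_of_abs_lt_dvd hdvd (by rw [abs_lt]; lia)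
      lia
    rw [sum_phiF_mul_eq_neg_one m hsub]
    norm_num

end Phi

/-- The cosine transform `j ↦ ∑_{t=1}^{m} a_t φ_{m,jt}` of a weight sequence `a`, of which only the
entries `a_1, …, a_m` matter; `Fcal` and `Gcal` are first and second differences of it. -/
noncomputable def cosTransform (m : ℕ) (a : ℕ → ℝ) (j : ℤ) : ℝ :=
  ∑ t ∈ Icc 1 m, a t * phiF m (j * t)

section CosTransform

variable (m : ℕ) (a b : ℕ → ℝ)

theorem cosTransform_zero : cosTransform m a 0 = 2 * ∑ t ∈ Icc 1 m, a t := by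
  simp only [cosTransform, zero_mul, phiF_zero, ← sum_mul]
  exact mul_comm _ _

theorem cosTransform_succ : cosTransform m a (m + 1) = cosTransform m a m := by
  simp only [cosTransform, phiF_succ_mul]

theorem cosTransform_one_sub_zero :
    cosTransform m a 1 - cosTransform m a 0 = ∑ t ∈ Icc 1 m, muF m t * a t := by
  simp only [cosTransform, ← sum_sub_distrib, ← mul_sub, one_mul, zero_mul, phiF_zero]
  exact sum_congr rfl fun t _ => mul_comm _ _

theorem cosTransform_muF_mul (j : ℤ) :
    cosTransform m (fun t => muF m t * a t) j
      = cosTransform m a (j + 1) - 2 * cosTransform m a j + cosTransform m a (j - 1) := by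
  simp only [cosTransform, mul_sum, ← sum_sub_distrib, ← sum_add_distrib]
  refine sum_congr rfl fun t _ => ?_
  linear_combination a t * muF_mul_phiF m j t

theorem sum_cosTransform_mul_cosTransform :
    ∑ j ∈ Icc 1 m, cosTransform m a j * cosTransform m b j
      = (2 * m + 1) * ∑ t ∈ Icc 1 m, a t * b t
        - 2 * ((∑ t ∈ Icc 1 m, a t) * ∑ t ∈ Icc 1 m, b t) := by
  calc ∑ j ∈ Icc 1 m, cosTransform m a j * cosTransform m b j
      = ∑ s ∈ Icc 1 m, ∑ t ∈ Icc 1 m,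
          a s * b t * ∑ j ∈ Icc 1 m, phiF m (j * s) * phiF m (j * t) := by
        simp only [cosTransform, sum_mul_sum, mul_mul_mul_comm]
        simp only [mul_sum]
        rw [sum_comm]
        exact sum_congr rfl fun s _ => sum_comm
    _ = ∑ s ∈ Icc 1 m, ∑ t ∈ Icc 1 m,
          a s * b t * ((if s = t then (2 * m + 1 : ℝ) else 0) - 2) :=
        sum_congr rfl fun s hs => sum_congr rfl fun t ht => by
          rw [sum_phiF_mul_mul_phiF_mul m hs ht]
    _ = ∑ s ∈ Icc 1 m, a s * b s * (2 * m + 1)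
          - (∑ s ∈ Icc 1 m, ∑ t ∈ Icc 1 m, a s * b t) * 2 := by
        simp only [mul_sub, sum_sub_distrib, mul_ite, mul_zero, sum_ite_eq, sum_ite_mem, inter_self,
          sum_mul]
    _ = (2 * m + 1) * ∑ t ∈ Icc 1 m, a t * b t
          - 2 * ((∑ t ∈ Icc 1 m, a t) * ∑ t ∈ Icc 1 m, b t) := by
        rw [← sum_mul, ← sum_mul_sum]
        ring

theorem sum_cosTransform_sub_sq :
    ∑ j ∈ Icc 1 m, (cosTransform m a j - cosTransform m a (j - 1)) ^ 2
      = -(2 * m + 1) * ∑ t ∈ Icc 1 m, muF m t * a t ^ 2 := by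
  have hparts := sum_sub_mul_sub_add_sum_mul_secondDiff (cosTransform m a) (cosTransform m a) m
  simp only [← cosTransform_muF_mul, sum_cosTransform_mul_cosTransform, cosTransform_succ,
    ← sq] at hparts
  have hweights : ∑ t ∈ Icc 1 m, a t * (muF m t * a t) = ∑ t ∈ Icc 1 m, muF m t * a t ^ 2 :=
    sum_congr rfl fun t _ => by ring
  rw [hweights, cosTransform_one_sub_zero, cosTransform_zero] at hparts
  linear_combination hparts

end CosTransform

section Interlacing

variable (m : ℕ) (r : ℤ)

theorem muF_mul_zpow {t : ℕ} (ht : t ∈ Icc 1 m) (k : ℤ) :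
    muF m t * muF m t ^ k = muF m t ^ (1 + k) :=
  (zpow_one_add₀ (muF_ne_zero m ht) k).symm

theorem Fcal_eq_cosTransform_sub (j : ℤ) :
    Fcal m r j = cosTransform m (fun t => muF m t ^ (-r)) j
      - cosTransform m (fun t => muF m t ^ (-r)) (j - 1) := by
  simp only [Fcal, cosTransform, mul_sub, sum_sub_distrib]

theorem Fcal_one : Fcal m r 1 = ∑ t ∈ Icc 1 m, muF m t ^ (1 - r) := by
  rw [Fcal_eq_cosTransform_sub, sub_self, cosTransform_one_sub_zero]
  exact sum_congr rfl fun t ht => muF_mul_zpow m ht (-r)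

theorem Gcal_eq_cosTransform (j : ℤ) :
    Gcal m r j = cosTransform m (fun t => muF m t ^ (1 - r)) j := by
  refine sum_congr rfl fun t ht => ?_
  rw [← muF_mul_phiF, ← mul_assoc, mul_comm _ (muF m t), muF_mul_zpow m ht, ← sub_eq_add_neg]

theorem sum_Fcal_sq :
    ∑ j ∈ Icc 1 m, Fcal m r j ^ 2
      = -(2 * m + 1) * ∑ t ∈ Icc 1 m, muF m t ^ (1 - 2 * r) := by
  simp only [Fcal_eq_cosTransform_sub, sum_cosTransform_sub_sq]
  congr 1
  refine sum_congr rfl fun t ht => ?_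
  rw [← zpow_natCast, ← zpow_mul, muF_mul_zpow m ht]
  ring_nf

theorem sum_Gcal_sq :
    ∑ j ∈ Icc 1 m, Gcal m r j ^ 2
      = (2 * m + 1) * ∑ t ∈ Icc 1 m, muF m t ^ (2 - 2 * r)
        - 2 * (∑ t ∈ Icc 1 m, muF m t ^ (1 - r)) ^ 2 := by
  simp only [Gcal_eq_cosTransform, sq, sum_cosTransform_mul_cosTransform]
  congr 2
  refine sum_congr rfl fun t ht => ?_
  rw [← zpow_add₀ (muF_ne_zero m ht)]
  ring_nf

end Interlacing

theorem stmt_15 (m : ℕ) (hm : 0 < m) (r : ℤ) :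
    (∑ j ∈ Finset.Icc 1 m, (Fcal m r j) ^ 2
        = -(2 * m + 1 : ℝ) * ∑ t ∈ Finset.Icc 1 m, (muF m t) ^ (1 - 2 * r)) ∧
    (-(2 * m + 1 : ℝ) * ∑ t ∈ Finset.Icc 1 m, (muF m t) ^ (1 - 2 * r)
        = -(2 * m + 1 : ℝ) * Fcal m (2 * r) 1) ∧
    (4 * (∑ t ∈ Finset.Icc 1 m, (muF m t) ^ (1 - r)) ^ 2
        + 2 * ∑ j ∈ Finset.Icc 1 m, (Gcal m r j) ^ 2
      = 2 * (2 * m + 1 : ℝ) * ∑ t ∈ Finset.Icc 1 m, (muF m t) ^ (2 - 2 * r)) := by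
  refine ⟨sum_Fcal_sq m r, by rw [Fcal_one], ?_⟩
  rw [sum_Gcal_sq]
  ring
end

section
/- Let m be a positive integer, n = 2m+1, and r ≥ 0 an integer. Then 2·𝔉(4r+3, (2r+2) mod n) = 𝔉(4r+4, (2r+2) mod n) = ( 𝔉(2r+2, (r+1) mod n) )² + 2·Σ_{j=1}^{m} ( 𝔉(2r+2, (r+j+1) mod n) )². -/
open Finset

/-- The Fleck number `𝔉(N, a mod n) = Σ_{0 ≤ k ≤ N, k ≡ a (mod n)} (−1)^k·binom(N,k)`. -/
def fleck (N n : ℕ) (a : ℤ) : ℤ :=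
  ∑ k ∈ Finset.range (N + 1),
    if (k : ℤ) ≡ a [ZMOD (n : ℤ)] then (-1) ^ k * (Nat.choose N k) else 0

/-! The Fleck number `𝔉(N, a mod n)` is the coefficient at `a` of `(1 - T) ^ N` in the group ring
`ℤ[ZMod n]`, where `T` is the generator of the cyclic group. Since
`1 - T⁻¹ = -T⁻¹ * (1 - T)`, these coefficients are symmetric up to the sign `(-1) ^ N` under
`a ↦ N - a`. For odd `N` this makes the two terms of Pascal's rule at the centre equal, which gives
the doubling identity; for even `N` it turns the convolution expressing
`(1 - T) ^ (2 * N) = (1 - T) ^ N * (1 - T) ^ N` at the central residue `N` into a sum of squares.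
When `n` is odd, that sum is folded over the pairs `±j` around the centre. -/

lemma sum_zmod_eq_sum_Icc {M : Type*} [AddCommMonoid M] (m : ℕ) (f : ZMod (2 * m + 1) → M) :
    ∑ x, f x = ∑ i ∈ Icc (-m : ℤ) m, f i := by
  refine sum_nbij' ZMod.valMinAbs Int.cast (fun x _ ↦ ?_) (by simp) (by simp) (fun i hi ↦ ?_)
    (by simp)
  · have bounds := x.valMinAbs_mem_Ioc
    grind
  · rw [ZMod.valMinAbs_spec]
    grind

lemma sum_zmod_of_even {M : Type*} [AddCommGroup M] (m : ℕ) {f : ZMod (2 * m + 1) → M}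
    (hf : f.Even) : ∑ x, f x = f 0 + 2 • ∑ j ∈ Icc 1 m, f j := by
  have hf_int : (fun i : ℤ ↦ f i).Even := fun i ↦ by simp [hf (i : ZMod (2 * m + 1))]
  rw [sum_zmod_eq_sum_Icc, sum_Icc_of_even_eq_range hf_int, range_eq_Ico,
    sum_eq_sum_Ico_succ_bot m.succ_pos]
  simp only [Nat.cast_zero, Int.cast_zero, zero_add, Nat.succ_eq_add_one, Int.cast_natCast,
    smul_add, ← Ico_add_one_right_eq_Icc]
  abel

section GroupRing

open AddMonoidAlgebra

variable {R G : Type*}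

lemma coeff_mul_eq_sum_univ [Semiring R] [AddGroup G] [Fintype G] (p q : R[G]) (x : G) :
    (p * q).coeff x = ∑ y, p.coeff y * q.coeff (-y + x) := by
  classical
  rw [coeff_mul_antidiag p q x (univ.image fun y ↦ (y, -y + x)),
    sum_image fun _ _ _ _ h ↦ congrArg Prod.fst h]
  rintro ⟨y, z⟩
  simp [eq_neg_add_iff_add_eq, eq_comm]

lemma coeff_one_sub_single_pow [Ring R] [AddMonoid G] [DecidableEq G] (g : G) (r : R) (N : ℕ)
    (x : G) :
    ((1 - single g r : R[G]) ^ N).coeff x =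
      ∑ k ∈ range (N + 1), if k • g = x then (-r) ^ k * (N.choose k : R) else 0 := by
  rw [sub_eq_neg_add, ← single_neg, (Commute.one_right _).add_pow]
  simp only [one_pow, mul_one, single_pow, coeff_sum, Finsupp.finsetSum_apply, natCast_def,
    single_mul_single, add_zero, coeff_single, Finsupp.single_apply]

lemma coeff_one_sub_single_pow_succ [Ring R] [AddGroup G] (g : G) (r : R) (N : ℕ) (x : G) :
    ((1 - single g r : R[G]) ^ (N + 1)).coeff x =
      ((1 - single g r : R[G]) ^ N).coeff x - ((1 - single g r : R[G]) ^ N).coeff (x - g) * r := by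
  rw [pow_succ, mul_sub, mul_one, coeff_sub, Finsupp.sub_apply, coeff_mul_single_apply,
    sub_eq_add_neg x]

lemma coeff_one_sub_single_pow_nsmul_sub [Ring R] [AddCommGroup G] (g : G) (N : ℕ) (x : G) :
    ((1 - single g 1 : R[G]) ^ N).coeff (N • g - x) =
      (-1) ^ N * ((1 - single g 1 : R[G]) ^ N).coeff x := by
  induction N generalizing x with
  | zero => classical simp [one_def, Finsupp.single_apply, eq_comm]
  | succ N ih =>
    have reflect_left : (N + 1) • g - x = N • g - (x - g) := by rw [succ_nsmul]; abel
    have reflect_right : (N + 1) • g - x - g = N • g - x := by rw [succ_nsmul]; abel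
    rw [coeff_one_sub_single_pow_succ, coeff_one_sub_single_pow_succ, reflect_right, reflect_left,
      mul_one, mul_one, ih, ih, pow_succ]
    noncomm_ring

lemma even_coeff_one_sub_single_pow_two_mul [Ring R] [AddCommGroup G] (g : G) (s : ℕ) :
    (fun x ↦ ((1 - single g 1 : R[G]) ^ (2 * s)).coeff (s • g + x)).Even := fun x ↦ by
  have reflect : s • g + -x = (2 * s) • g - (s • g + x) := by rw [two_mul, add_nsmul]; abel
  dsimp only
  rw [reflect, coeff_one_sub_single_pow_nsmul_sub, (even_two_mul s).neg_one_pow, one_mul]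

lemma fleck_eq_coeff (N n : ℕ) (a : ℤ) :
    fleck N n a = ((1 - single 1 1 : ℤ[ZMod n]) ^ N).coeff a := by
  simp only [fleck, coeff_one_sub_single_pow, nsmul_one, ← ZMod.intCast_eq_intCast_iff,
    Int.cast_natCast]

lemma fleck_succ (N n : ℕ) (a : ℤ) : fleck (N + 1) n a = fleck N n a - fleck N n (a - 1) := by
  simp only [fleck_eq_coeff, coeff_one_sub_single_pow_succ, Int.cast_sub, Int.cast_one, mul_one]

lemma fleck_natCast_sub (N n : ℕ) (a : ℤ) : fleck N n (N - a) = (-1) ^ N * fleck N n a := by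
  simpa [fleck_eq_coeff] using
    coeff_one_sub_single_pow_nsmul_sub (R := ℤ) (1 : ZMod n) N (a : ZMod n)

lemma fleck_two_mul_self_eq_sum_sq (N n : ℕ) [NeZero n] :
    fleck (2 * N) n N =
      (-1) ^ N * ∑ x, ((1 - single 1 1 : ℤ[ZMod n]) ^ N).coeff x ^ 2 := by
  rw [fleck_eq_coeff, two_mul, pow_add, coeff_mul_eq_sum_univ, mul_sum]
  refine sum_congr rfl fun x _ ↦ ?_
  have symm := coeff_one_sub_single_pow_nsmul_sub (R := ℤ) (1 : ZMod n) N x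
  rw [nsmul_one] at symm
  rw [Int.cast_natCast, neg_add_eq_sub, symm]
  ring

lemma two_mul_fleck_two_mul_add_one (N n : ℕ) :
    2 * fleck (2 * N + 1) n (N + 1) = fleck (2 * N + 2) n (N + 1) := by
  have antisymm : fleck (2 * N + 1) n N = -fleck (2 * N + 1) n (N + 1) := by
    have reflect : ((2 * N + 1 : ℕ) : ℤ) - (N + 1) = N := by lia
    have symm := fleck_natCast_sub (2 * N + 1) n (N + 1)
    rwa [reflect, (odd_two_mul_add_one N).neg_one_pow, neg_one_mul] at symm
  rw [fleck_succ (2 * N + 1), add_sub_cancel_right, antisymm]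
  ring

lemma fleck_four_mul_eq_sum_sq (s m : ℕ) :
    fleck (4 * s) (2 * m + 1) (2 * s) =
      fleck (2 * s) (2 * m + 1) s ^ 2 +
        2 * ∑ j ∈ Icc 1 m, fleck (2 * s) (2 * m + 1) (s + j) ^ 2 := by
  let c : ZMod (2 * m + 1) → ℤ := ((1 - single 1 1 : ℤ[ZMod (2 * m + 1)]) ^ (2 * s)).coeff
  have sq_even : (fun x ↦ c (s + x) ^ 2).Even := fun x ↦ by
    simpa using congrArg (· ^ 2) <|
      even_coeff_one_sub_single_pow_two_mul (R := ℤ) (1 : ZMod (2 * m + 1)) s x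
  calc fleck (4 * s) (2 * m + 1) (2 * s)
    _ = ∑ x, c x ^ 2 := by
      simpa [← mul_assoc] using fleck_two_mul_self_eq_sum_sq (2 * s) (2 * m + 1)
    _ = ∑ x, c (s + x) ^ 2 := (Equiv.sum_comp (Equiv.addLeft (s : ZMod _)) (c · ^ 2)).symm
    _ = c s ^ 2 + 2 * ∑ j ∈ Icc 1 m, c (s + j) ^ 2 := by simp [sum_zmod_of_even m sq_even]
    _ = fleck (2 * s) (2 * m + 1) s ^ 2 +
          2 * ∑ j ∈ Icc 1 m, fleck (2 * s) (2 * m + 1) (s + j) ^ 2 := by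
      simp [fleck_eq_coeff, c]

end GroupRing

theorem stmt_17 (m : ℕ) (hm : 0 < m) (r : ℕ) :
    2 * fleck (4 * r + 3) (2 * m + 1) (2 * (r : ℤ) + 2) =
        fleck (4 * r + 4) (2 * m + 1) (2 * (r : ℤ) + 2) ∧
    fleck (4 * r + 4) (2 * m + 1) (2 * (r : ℤ) + 2) =
        (fleck (2 * r + 2) (2 * m + 1) ((r : ℤ) + 1)) ^ 2 +
          2 * ∑ j ∈ Finset.Icc 1 m, (fleck (2 * r + 2) (2 * m + 1) ((r : ℤ) + j + 1)) ^ 2 := by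
  constructor
  · convert two_mul_fleck_two_mul_add_one (2 * r + 1) (2 * m + 1) using 2 <;> grind
  · simpa [mul_add, add_right_comm] using fleck_four_mul_eq_sum_sq (r + 1) m
end
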